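/- Let ũ, μ ∈ ℝ and 0 < ξ < σ, and set σ' = √(σ² − ξ²). Then ∫_ℝ Φ(−|m − ũ| / σ') · (1/ξ) φ((m − μ)/ξ) dm = 2 T( (ũ − μ)/σ , σ'/ξ ), where the integral is the expectation of the conditional error Φ(−|m − ũ|/σ') when m is normally distributed with mean μ and variance ξ². -/

import Mathlib

open MeasureTheory

/-- The standard normal cumulative distribution function. -/
noncomputable def Phi (x : ℝ) : ℝ :=
  ∫ t in Set.Iic x, Real.exp (-t^2/2) / Real.sqrt (2 * Real.pi)

/-- The standard normal density. -/
noncomputable def phiPdf (x : ℝ) : ℝ :=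
  Real.exp (-x^2/2) / Real.sqrt (2 * Real.pi)

/-- Owen's T function. -/
noncomputable def owenT (h a : ℝ) : ℝ :=
  (1 / (2 * Real.pi)) * ∫ x in (0:ℝ)..a, Real.exp (-h^2 * (1 + x^2) / 2) / (1 + x^2)

/-!
After standardization the claim reads `E Φ(-|Z - d| / s) = 2 T(d / c, s)` with `Z` standard normal
and `c = √(1 + s²)`. Both sides tend to `0` as `d → ∞`, so it suffices to compare their derivatives
in `d`. On the left the derivative is `∫ ± φ(w / s) φ(w + d) / s dw`, the sign being that of `w`;
completing the square turns the product into `φ(d / c) φ(c w / s + s d / c)`, whose half-line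
integrals are values of `Φ`. On the right one uses `∂T/∂h (h, a) = -φ(h) (Φ(a h) - 1/2)`.
-/

open Filter Topology Set ProbabilityTheory
open scoped NNReal

section WeightedIntegrals

variable {f p : ℝ → ℝ}

lemma hasDerivAt_integral_comp_sub_mul_of_lipschitzWith {K : ℝ≥0} (hf : LipschitzWith K f)
    (hp : Integrable p) {d : ℝ} (hfp : Integrable fun z ↦ f (z - d) * p z) :
    HasDerivAt (fun d ↦ ∫ z, f (z - d) * p z) (-∫ z, deriv f (z - d) * p z) d := by
  have hlip (z : ℝ) : LipschitzWith (Real.nnabs (K * ‖p z‖)) fun d ↦ f (z - d) * p z := by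
    refine LipschitzWith.of_dist_le_mul fun x y ↦ ?_
    calc dist (f (z - x) * p z) (f (z - y) * p z) = dist (f (z - x)) (f (z - y)) * ‖p z‖ := by
          rw [dist_eq_norm, dist_eq_norm, ← sub_mul, norm_mul]
      _ ≤ K * dist x y * ‖p z‖ := by
          gcongr
          simpa only [dist_sub_left] using hf.dist_le_mul (z - x) (z - y)
      _ = Real.nnabs (K * ‖p z‖) * dist x y := by
          rw [Real.coe_nnabs, abs_of_nonneg (by positivity : 0 ≤ K * ‖p z‖)]
          ring
  have hderiv : ∀ᵐ z, HasDerivAt (fun d ↦ f (z - d) * p z) (-(deriv f (z - d) * p z)) d := by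
    filter_upwards [(measurePreserving_sub_right volume d).quasiMeasurePreserving.ae
      hf.ae_differentiableAt_real] with z hz
    have h := (hz.hasDerivAt.comp d ((hasDerivAt_id d).const_sub z)).mul_const (p z)
    exact h.congr_deriv (by ring)
  rw [← integral_neg]
  refine (hasDerivAt_integral_of_dominated_loc_of_lip univ_mem (.of_forall fun x ↦ ?_) hfp ?_
    (ae_of_all _ fun z ↦ (hlip z).lipschitzOnWith) (hp.norm.const_mul K) hderiv).2
  · exact (hf.continuous.comp (by fun_prop)).aestronglyMeasurable.mul hp.aestronglyMeasurable
  · exact (((measurable_deriv f).comp (measurable_id.sub_const d)).aestronglyMeasurable.mul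
      hp.aestronglyMeasurable).neg

lemma tendsto_integral_comp_sub_mul_atTop {C l : ℝ} (hf : Continuous f) (hC : ∀ x, ‖f x‖ ≤ C)
    (hl : Tendsto f atBot (𝓝 l)) (hp : Integrable p) :
    Tendsto (fun d ↦ ∫ z, f (z - d) * p z) atTop (𝓝 (l * ∫ z, p z)) := by
  rw [← integral_const_mul]
  refine tendsto_integral_filter_of_dominated_convergence (fun z ↦ C * ‖p z‖)
    (.of_forall fun d ↦ ?_) (.of_forall fun d ↦ ae_of_all _ fun z ↦ ?_) (hp.norm.const_mul C)
    (ae_of_all _ fun z ↦ ?_)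
  · exact (hf.comp (by fun_prop)).aestronglyMeasurable.mul hp.aestronglyMeasurable
  · rw [norm_mul]
    gcongr
    exact hC _
  · exact (hl.comp (tendsto_atBot_add_const_left _ z tendsto_neg_atTop_atBot)).mul_const (p z)

lemma integral_sign_mul (hf : Integrable f) :
    ∫ w, (SignType.sign w : ℝ) * f w = (∫ w in Ioi 0, f w) - ∫ w in Iic 0, f w := by
  rw [← integral_indicator measurableSet_Ioi, ← integral_indicator measurableSet_Iic,
    ← integral_sub (hf.indicator measurableSet_Ioi) (hf.indicator measurableSet_Iic)]
  refine integral_congr_ae ?_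
  filter_upwards [Measure.ae_ne volume (0 : ℝ)] with w hw
  rcases hw.lt_or_gt with hw | hw <;> simp [hw, hw.le, hw.not_ge, hw.not_gt]

end WeightedIntegrals

section StandardNormal

lemma phiPdf_eq_gaussianPDFReal : phiPdf = gaussianPDFReal 0 1 := by
  ext x
  simp [phiPdf, gaussianPDFReal, div_eq_inv_mul]

lemma Phi_eq_integral (x : ℝ) : Phi x = ∫ t in Iic x, phiPdf t := rfl

lemma Phi_eq_cdf_gaussianReal : Phi = cdf (gaussianReal 0 1) := by
  ext x
  rw [cdf_eq_real, Measure.real, gaussianReal_apply_eq_integral _ one_ne_zero,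
    ENNReal.toReal_ofReal (integral_nonneg fun _ ↦ gaussianPDFReal_nonneg _ _ _),
    ← phiPdf_eq_gaussianPDFReal, Phi_eq_integral]

@[fun_prop]
lemma continuous_phiPdf : Continuous phiPdf := by
  unfold phiPdf
  fun_prop

lemma phiPdf_nonneg (x : ℝ) : 0 ≤ phiPdf x := by
  unfold phiPdf
  positivity

lemma phiPdf_le_one (x : ℝ) : phiPdf x ≤ 1 := by
  have hexp : Real.exp (-x ^ 2 / 2) ≤ 1 := Real.exp_le_one_iff.2 (by nlinarith [sq_nonneg x])
  have hsqrt : 1 ≤ √(2 * Real.pi) := Real.one_le_sqrt.2 (by linarith [Real.pi_gt_three])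
  exact div_le_one_of_le₀ (hexp.trans hsqrt) (by positivity)

lemma phiPdf_neg (x : ℝ) : phiPdf (-x) = phiPdf x := by
  simp [phiPdf]

lemma phiPdf_mul_phiPdf (x y : ℝ) :
    phiPdf x * phiPdf y = Real.exp (-(x ^ 2 + y ^ 2) / 2) / (2 * Real.pi) := by
  rw [phiPdf, phiPdf, div_mul_div_comm, ← Real.exp_add, Real.mul_self_sqrt (by positivity)]
  ring_nf

lemma integrable_phiPdf : Integrable phiPdf :=
  phiPdf_eq_gaussianPDFReal ▸ integrable_gaussianPDFReal 0 1

lemma integral_phiPdf : ∫ x, phiPdf x = 1 := by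
  rw [phiPdf_eq_gaussianPDFReal, integral_gaussianPDFReal_eq_one _ one_ne_zero]

lemma integral_mul_phiPdf_sub_div (g : ℝ → ℝ) (μ : ℝ) {ξ : ℝ} (hξ : 0 < ξ) :
    ∫ m, g m * ((1 / ξ) * phiPdf ((m - μ) / ξ)) = ∫ z, g (ξ * z + μ) * phiPdf z := by
  let F : ℝ → ℝ := fun m ↦ g m * ((1 / ξ) * phiPdf ((m - μ) / ξ))
  calc ∫ m, F m = ∫ m, F (m + μ) := (integral_add_right_eq_self F μ).symm
    _ = ξ * ∫ z, F (ξ * z + μ) := by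
      rw [Measure.integral_comp_mul_left (fun m ↦ F (m + μ)) ξ, abs_of_pos (inv_pos.2 hξ),
        smul_eq_mul, mul_inv_cancel_left₀ hξ.ne']
    _ = ∫ z, g (ξ * z + μ) * phiPdf z := by
      rw [← integral_const_mul]
      congr with z
      simp only [F, add_sub_cancel_right, mul_div_cancel_left₀ z hξ.ne']
      field_simp

lemma abs_Phi_le_one (x : ℝ) : |Phi x| ≤ 1 := by
  rw [Phi_eq_cdf_gaussianReal, abs_of_nonneg (cdf_nonneg _ _)]
  exact cdf_le_one _ _

lemma tendsto_Phi_atBot : Tendsto Phi atBot (𝓝 0) :=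
  Phi_eq_cdf_gaussianReal ▸ tendsto_cdf_atBot _

lemma Phi_neg (x : ℝ) : Phi (-x) = 1 - Phi x := by
  have hsymm : Phi (-x) = ∫ t in Ioi x, phiPdf t := by
    simp_rw [Phi_eq_integral, ← integral_comp_neg_Ioi, phiPdf_neg]
  have htotal : Phi x + ∫ t in Ioi x, phiPdf t = 1 :=
    (intervalIntegral.integral_Iic_add_Ioi integrable_phiPdf.integrableOn
      integrable_phiPdf.integrableOn).trans integral_phiPdf
  linarith

lemma Phi_zero : Phi 0 = 1 / 2 := by
  have hsymm := Phi_neg 0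
  rw [neg_zero] at hsymm
  linarith

lemma integral_phiPdf_eq_Phi_sub (a b : ℝ) : ∫ t in a..b, phiPdf t = Phi b - Phi a :=
  (intervalIntegral.integral_Iic_sub_Iic integrable_phiPdf.integrableOn
    integrable_phiPdf.integrableOn).symm

lemma hasDerivAt_Phi (x : ℝ) : HasDerivAt Phi (phiPdf x) x := by
  have hPhi : Phi = fun y ↦ (∫ t in (0 : ℝ)..y, phiPdf t) + Phi 0 := by
    ext y
    rw [integral_phiPdf_eq_Phi_sub, sub_add_cancel]
  rw [hPhi]
  exact (continuous_phiPdf.integral_hasStrictDerivAt 0 x).hasDerivAt.add_const _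

lemma lipschitzWith_Phi : LipschitzWith 1 Phi := by
  refine lipschitzWith_of_nnnorm_deriv_le (fun x ↦ (hasDerivAt_Phi x).differentiableAt) fun x ↦ ?_
  rw [(hasDerivAt_Phi x).deriv, ← NNReal.coe_le_coe, coe_nnnorm, Real.norm_eq_abs,
    abs_of_nonneg (phiPdf_nonneg x)]
  exact phiPdf_le_one x

lemma integrable_phiPdf_mul_add {k : ℝ} (hk : k ≠ 0) (b : ℝ) :
    Integrable fun w ↦ phiPdf (k * w + b) :=
  (integrable_phiPdf.comp_add_right b).comp_mul_left' hk

lemma integral_Iic_phiPdf_mul_add {k : ℝ} (hk : 0 < k) (b x : ℝ) :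
    ∫ w in Iic x, phiPdf (k * w + b) = Phi (k * x + b) / k := by
  have hderiv (w : ℝ) : HasDerivAt (fun w ↦ Phi (k * w + b) / k) (phiPdf (k * w + b)) w := by
    have haffine : HasDerivAt (fun w ↦ k * w + b) k w := by
      simpa using ((hasDerivAt_id w).const_mul k).add_const b
    exact (((hasDerivAt_Phi _).comp w haffine).div_const k).congr_deriv
      (mul_div_cancel_right₀ _ hk.ne')
  have hlim : Tendsto (fun w ↦ Phi (k * w + b) / k) atBot (𝓝 0) := by
    simpa using (tendsto_Phi_atBot.comp
      (tendsto_atBot_add_const_right _ b (tendsto_id.const_mul_atBot hk))).div_const k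
  rw [integral_Iic_of_hasDerivAt_of_tendsto' (fun w _ ↦ hderiv w)
    (integrable_phiPdf_mul_add hk.ne' b).integrableOn hlim, sub_zero]

lemma integral_sign_mul_phiPdf_mul_add {k : ℝ} (hk : 0 < k) (b : ℝ) :
    ∫ w, (SignType.sign w : ℝ) * phiPdf (k * w + b) = (Phi (-b) - Phi b) / k := by
  have hIoi : ∫ w in Ioi 0, phiPdf (k * w + b) = ∫ w in Iic 0, phiPdf (k * w + -b) := by
    rw [← neg_zero, ← integral_comp_neg_Iic, neg_zero]
    congr with w
    rw [← phiPdf_neg]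
    ring_nf
  rw [integral_sign_mul (integrable_phiPdf_mul_add hk.ne' b), hIoi,
    integral_Iic_phiPdf_mul_add hk, integral_Iic_phiPdf_mul_add hk, mul_zero, zero_add, zero_add,
    sub_div]

end StandardNormal

section OwenT

lemma hasDerivAt_owenT_left_integral (h a : ℝ) :
    HasDerivAt (fun h ↦ owenT h a)
      (1 / (2 * Real.pi) * ∫ x in (0 : ℝ)..a, -h * Real.exp (-h ^ 2 * (1 + x ^ 2) / 2)) h := by
  let F' : ℝ → ℝ → ℝ := fun h x ↦ -h * Real.exp (-h ^ 2 * (1 + x ^ 2) / 2)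
  have hne (x : ℝ) : 1 + x ^ 2 ≠ 0 := by positivity
  have hderiv (x y : ℝ) : HasDerivAt
      (fun h ↦ Real.exp (-h ^ 2 * (1 + x ^ 2) / 2) / (1 + x ^ 2)) (F' y x) y := by
    have hexponent := ((hasDerivAt_pow 2 y).fun_neg.mul_const (1 + x ^ 2)).div_const 2
    refine (hexponent.exp.div_const (1 + x ^ 2)).congr_deriv ?_
    simp only [F']
    push_cast
    field_simp [hne x]
  have hbound (x y : ℝ) (hy : y ∈ Metric.ball h 1) : ‖F' y x‖ ≤ |h| + 1 := by
    have hexp : Real.exp (-y ^ 2 * (1 + x ^ 2) / 2) ≤ 1 :=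
      Real.exp_le_one_iff.2 (by nlinarith [sq_nonneg y, sq_nonneg (y * x)])
    rw [Metric.mem_ball, Real.dist_eq] at hy
    calc ‖F' y x‖ = |y| * Real.exp (-y ^ 2 * (1 + x ^ 2) / 2) := by
          rw [Real.norm_eq_abs, abs_mul, abs_neg, Real.abs_exp]
      _ ≤ |y| := mul_le_of_le_one_right (abs_nonneg y) hexp
      _ ≤ |h| + 1 := by linarith [abs_sub_abs_le_abs_sub y h]
  exact (intervalIntegral.hasDerivAt_integral_of_dominated_loc_of_deriv_le
    (Metric.ball_mem_nhds h one_pos)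
    (.of_forall fun y ↦ Continuous.aestronglyMeasurable (by fun_prop (disch := exact hne _)))
    (Continuous.intervalIntegrable (by fun_prop (disch := exact hne _)) _ _)
    (Continuous.aestronglyMeasurable (by fun_prop)) (ae_of_all _ fun x _ y ↦ hbound x y)
    intervalIntegrable_const (ae_of_all _ fun x _ y _ ↦ hderiv x y)).2.const_mul _

lemma hasDerivAt_owenT_left (h a : ℝ) :
    HasDerivAt (fun h ↦ owenT h a) (-phiPdf h * (Phi (a * h) - 1 / 2)) h := by
  refine (hasDerivAt_owenT_left_integral h a).congr_deriv ?_
  have hfactor (x : ℝ) : -h * Real.exp (-h ^ 2 * (1 + x ^ 2) / 2) =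
      -(2 * Real.pi) * phiPdf h * (h * phiPdf (h * x)) := by
    have hexponent : -h ^ 2 * (1 + x ^ 2) / 2 = -(h ^ 2 + (h * x) ^ 2) / 2 := by ring
    rw [hexponent, ← div_mul_cancel₀ (Real.exp _) (by positivity : 2 * Real.pi ≠ 0),
      ← phiPdf_mul_phiPdf]
    ring
  simp_rw [hfactor]
  rw [intervalIntegral.integral_const_mul, intervalIntegral.integral_const_mul,
    intervalIntegral.mul_integral_comp_mul_left, integral_phiPdf_eq_Phi_sub, mul_zero, Phi_zero,
    mul_comm h a]
  field_simp

lemma tendsto_owenT_left_atTop (a : ℝ) : Tendsto (fun h ↦ owenT h a) atTop (𝓝 0) := by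
  have hle (h x : ℝ) : ‖Real.exp (-h ^ 2 * (1 + x ^ 2) / 2) / (1 + x ^ 2)‖
      ≤ Real.exp (-(h ^ 2 / 2)) := by
    rw [Real.norm_eq_abs, abs_of_nonneg (by positivity)]
    refine (div_le_self (by positivity) (by nlinarith [sq_nonneg x])).trans ?_
    exact Real.exp_le_exp.2 (by nlinarith [sq_nonneg (h * x)])
  have hexp : Tendsto (fun h : ℝ ↦ Real.exp (-(h ^ 2 / 2))) atTop (𝓝 0) :=
    Real.tendsto_exp_neg_atTop_nhds_zero.comp
      ((tendsto_pow_atTop two_ne_zero).atTop_div_const two_pos)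
  have hintegral := squeeze_zero_norm (fun h ↦
    intervalIntegral.norm_integral_le_of_norm_le_const (a := 0) (b := a) fun x _ ↦ hle h x)
    (by simpa using hexp.mul_const |a - 0|)
  simpa [owenT] using hintegral.const_mul (1 / (2 * Real.pi))

end OwenT

section ConditionalError

/-- The conditional error `Φ(-|w| / s)` of a threshold decision, where `w` is the signed distance
to the threshold and `s` the noise level; `Φ(-|m - ũ| / σ')` is `condError σ' (m - ũ)`. -/
noncomputable def condError (s w : ℝ) : ℝ := Phi (-|w| / s)

variable {s : ℝ}

lemma abs_condError_le_one (s w : ℝ) : |condError s w| ≤ 1 := abs_Phi_le_one _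

lemma exists_lipschitzWith_condError (s : ℝ) : ∃ K, LipschitzWith K (condError s) := by
  have hcomp : condError s = Phi ∘ (fun x ↦ -s⁻¹ • x) ∘ norm := by
    ext w
    simp [condError, div_eq_inv_mul]
  rw [hcomp]
  exact ⟨_, lipschitzWith_Phi.comp ((lipschitzWith_smul (-s⁻¹)).comp lipschitzWith_one_norm)⟩

lemma continuous_condError (s : ℝ) : Continuous (condError s) :=
  (exists_lipschitzWith_condError s).choose_spec.continuous

lemma tendsto_condError_atBot (hs : 0 < s) : Tendsto (condError s) atBot (𝓝 0) :=
  tendsto_Phi_atBot.comp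
    ((tendsto_neg_atTop_atBot.comp tendsto_abs_atBot_atTop).atBot_div_const hs)

lemma deriv_condError (s : ℝ) {w : ℝ} (hw : w ≠ 0) :
    deriv (condError s) w = -(SignType.sign w * phiPdf (w / s) / s) := by
  have h := (hasDerivAt_Phi (-|w| / s)).comp w ((hasDerivAt_abs hw).neg.div_const s)
  have hpdf : phiPdf (-|w| / s) = phiPdf (w / s) := by
    simp [phiPdf, div_pow]
  rw [hpdf] at h
  exact h.deriv.trans (by ring)

lemma integrable_condError_sub_mul_phiPdf (s d : ℝ) :
    Integrable fun z ↦ condError s (z - d) * phiPdf z :=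
  integrable_phiPdf.bdd_mul ((continuous_condError s).comp (by fun_prop)).aestronglyMeasurable
    (ae_of_all _ fun _ ↦ abs_condError_le_one s _)

lemma phiPdf_div_mul_phiPdf_add (hs : s ≠ 0) (d w : ℝ) :
    phiPdf (w / s) * phiPdf (w + d) =
      phiPdf (d / √(1 + s ^ 2)) * phiPdf (√(1 + s ^ 2) / s * w + s * (d / √(1 + s ^ 2))) := by
  have hc : √(1 + s ^ 2) ^ 2 = 1 + s ^ 2 := Real.sq_sqrt (by positivity)
  have hc0 : √(1 + s ^ 2) ≠ 0 := by positivity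
  have hsq : (w / s) ^ 2 + (w + d) ^ 2 = (d / √(1 + s ^ 2)) ^ 2 +
      (√(1 + s ^ 2) / s * w + s * (d / √(1 + s ^ 2))) ^ 2 := by
    generalize √(1 + s ^ 2) = c at *
    field_simp
    linear_combination (s ^ 2 * d ^ 2 - c ^ 2 * w ^ 2) * hc
  rw [phiPdf_mul_phiPdf, phiPdf_mul_phiPdf, hsq]

lemma integral_deriv_condError_sub_mul_phiPdf (hs : 0 < s) (d : ℝ) :
    ∫ z, deriv (condError s) (z - d) * phiPdf z =
      phiPdf (d / √(1 + s ^ 2)) / √(1 + s ^ 2) *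
        (Phi (s * (d / √(1 + s ^ 2))) - Phi (-(s * (d / √(1 + s ^ 2))))) := by
  set c := √(1 + s ^ 2)
  have hc0 : 0 < c := by positivity
  calc ∫ z, deriv (condError s) (z - d) * phiPdf z
      = ∫ w, deriv (condError s) w * phiPdf (w + d) := by
        rw [← integral_add_right_eq_self _ d]
        simp only [add_sub_cancel_right]
    _ = ∫ w, -(phiPdf (d / c) / s) *
          ((SignType.sign w : ℝ) * phiPdf (c / s * w + s * (d / c))) := by
        refine integral_congr_ae ?_
        filter_upwards [Measure.ae_ne volume (0 : ℝ)] with w hw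
        rw [deriv_condError s hw]
        linear_combination (-SignType.sign w / s : ℝ) * phiPdf_div_mul_phiPdf_add hs.ne' d w
    _ = phiPdf (d / c) / c * (Phi (s * (d / c)) - Phi (-(s * (d / c)))) := by
        rw [integral_const_mul, integral_sign_mul_phiPdf_mul_add (div_pos hc0 hs)]
        field_simp
        ring

theorem integral_condError_sub_mul_phiPdf (hs : 0 < s) (d : ℝ) :
    ∫ z, condError s (z - d) * phiPdf z = 2 * owenT (d / √(1 + s ^ 2)) s := by
  set c := √(1 + s ^ 2)
  have hc0 : 0 < c := by positivity
  let diff : ℝ → ℝ := fun d ↦ (∫ z, condError s (z - d) * phiPdf z) - 2 * owenT (d / c) s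
  have hderiv (x : ℝ) : HasDerivAt diff 0 x := by
    obtain ⟨K, hK⟩ := exists_lipschitzWith_condError s
    have herr := hasDerivAt_integral_comp_sub_mul_of_lipschitzWith hK integrable_phiPdf
      (integrable_condError_sub_mul_phiPdf s x)
    have howen := (hasDerivAt_owenT_left (x / c) s).comp x ((hasDerivAt_id x).div_const c)
    refine (herr.sub (howen.const_mul 2)).congr_deriv ?_
    rw [integral_deriv_condError_sub_mul_phiPdf hs, Phi_neg]
    ring
  have hlim : Tendsto diff atTop (𝓝 0) := by
    have herr := tendsto_integral_comp_sub_mul_atTop (continuous_condError s)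
      (abs_condError_le_one s) (tendsto_condError_atBot hs) integrable_phiPdf
    have howen := (tendsto_owenT_left_atTop s).comp (tendsto_id.atTop_div_const hc0)
    simpa [diff] using herr.sub (howen.const_mul 2)
  have hconst (x : ℝ) : diff x = diff d :=
    is_const_of_deriv_eq_zero (fun x ↦ (hderiv x).differentiableAt) (fun x ↦ (hderiv x).deriv) x d
  exact sub_eq_zero.1 (tendsto_nhds_unique (tendsto_const_nhds.congr fun x ↦ (hconst x).symm) hlim)

lemma condError_mul_left {k : ℝ} (hk : 0 < k) (s w : ℝ) :
    condError s (k * w) = condError (s / k) w := by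
  rw [condError, condError, abs_mul, abs_of_pos hk]
  congr 1
  field_simp

theorem integral_condError_sub_mul_phiPdf_sub_div {ξ : ℝ} (hs : 0 < s) (hξ : 0 < ξ) (u μ : ℝ) :
    ∫ m, condError s (m - u) * ((1 / ξ) * phiPdf ((m - μ) / ξ)) =
      2 * owenT ((u - μ) / √(s ^ 2 + ξ ^ 2)) (s / ξ) := by
  have hscale : √(1 + (s / ξ) ^ 2) = √(s ^ 2 + ξ ^ 2) / ξ := by
    have hsq : 1 + (s / ξ) ^ 2 = (s ^ 2 + ξ ^ 2) / ξ ^ 2 := by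
      field_simp
      ring
    rw [hsq, Real.sqrt_div' _ (sq_nonneg ξ), Real.sqrt_sq hξ.le]
  have haffine (z : ℝ) : ξ * z + μ - u = ξ * (z - (u - μ) / ξ) := by
    field_simp
    ring
  rw [integral_mul_phiPdf_sub_div (fun m ↦ condError s (m - u)) μ hξ]
  simp only [haffine, condError_mul_left hξ]
  rw [integral_condError_sub_mul_phiPdf (div_pos hs hξ), hscale, div_div_div_cancel_right₀ hξ.ne']

end ConditionalError

/-- The expectation of the conditional error `Φ(−|m − ũ|/σ')` when
`m ∼ N(μ, ξ²)` equals `2 T((ũ − μ)/σ, σ'/ξ)` with `σ' = √(σ² − ξ²)`. -/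
theorem expected_conditional_error_owenT (utld μ ξ σ : ℝ) (hξ : 0 < ξ) (hξσ : ξ < σ) :
    (∫ m : ℝ, Phi (-|m - utld| / Real.sqrt (σ^2 - ξ^2)) * ((1/ξ) * phiPdf ((m - μ)/ξ)))
      = 2 * owenT ((utld - μ)/σ) (Real.sqrt (σ^2 - ξ^2) / ξ) := by
  have hvar : 0 < σ ^ 2 - ξ ^ 2 := by nlinarith
  have hσ : √(√(σ ^ 2 - ξ ^ 2) ^ 2 + ξ ^ 2) = σ := by
    rw [Real.sq_sqrt hvar.le, sub_add_cancel, Real.sqrt_sq (hξ.trans hξσ).le]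
  simpa only [hσ, condError] using
    integral_condError_sub_mul_phiPdf_sub_div (Real.sqrt_pos.2 hvar) hξ utld μ
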